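/- Let r ≥ 3 be an integer, and let f ∈ L^r_{∞,∞} be non-constant. Set α = M_r(f) and b = M_{r−1}(f)/M_r(f), and for β ≥ 0 let g_β = α·ψ_r(β,b,0). Then α, b > 0, and for every β ≥ 0 one has M_{r−1}(g_β) = M_{r−1}(f) and M_r(g_β) = M_r(f); moreover, for every integer s with 0 ≤ s < r−1, the function β ↦ M_s(g_β) is continuous, increasing, and tends to ∞ as β → ∞. -/

import Mathlib

open MeasureTheory Filter

noncomputable section

/-- The uniform norm `‖f‖ = sup_{t ∈ ℝ} |f t|` of a function `f : ℝ → ℝ`. -/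
def unif (f : ℝ → ℝ) : ℝ := ⨆ t : ℝ, |f t|

/-- `M k f = ‖f⁽ᵏ⁾‖`, the uniform norm of the `k`-th derivative of `f`. -/
def M (k : ℕ) (f : ℝ → ℝ) : ℝ := unif (iteratedDeriv k f)

/-- The class `L^r_{∞,∞}`: bounded functions `f : ℝ → ℝ` having `r-1` (continuous)
derivatives, with `f⁽ʳ⁻¹⁾` locally absolutely continuous and `f⁽ʳ⁾` essentially bounded;
the last two conditions are equivalent to `f⁽ʳ⁻¹⁾` being Lipschitz. -/
def MemL (r : ℕ) (f : ℝ → ℝ) : Prop :=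
  Continuous f ∧ (∃ C : ℝ, ∀ t : ℝ, |f t| ≤ C) ∧ ContDiff ℝ (r - 1 : ℕ) f ∧
    ∃ K : NNReal, LipschitzWith K (iteratedDeriv (r - 1) f)

/-- The Euler perfect spline `φ_r`: the `r`-th `2π`-periodic antiderivative with zero
mean value of `t ↦ sgn (sin t)`. -/
def eulerPhi : ℕ → ℝ → ℝ
  | 0 => fun t => Real.sign (Real.sin t)
  | (s + 1) => fun t =>
      (∫ x in (0:ℝ)..t, eulerPhi s x) -
        (1 / (2 * Real.pi)) * ∫ x in (0:ℝ)..(2 * Real.pi), ∫ u in (0:ℝ)..x, eulerPhi s u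

/-- `φ_{λ,r}(t) = λ^{-r} φ_r (λ t)`. -/
def eulerPhiL (lam : ℝ) (r : ℕ) (t : ℝ) : ℝ := lam ^ (-(r : ℤ)) * eulerPhi r (lam * t)

/-- The basic step function: `0` on `[0,a]`, `1` on `(a, a+b]`, `0` after `a+b`. -/
def psiBase (a b : ℝ) (t : ℝ) : ℝ := if t ≤ a then 0 else if t ≤ a + b then 1 else 0

/-- `psiBase` continued evenly with respect to the point `a+b+c`. -/
def psiHalf (a b c t : ℝ) : ℝ :=
  if t ≤ a + b + c then psiBase a b t else psiBase a b (2 * (a + b + c) - t)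

/-- The Rodov step function `ψ_0(a,b,c)`: equal to `psiBase` on `[0, a+b+c]`, continued
evenly with respect to `a+b+c`, then oddly with respect to `2(a+b+c)`, then
`4(a+b+c)`-periodically. -/
def psiZero (a b c t : ℝ) : ℝ :=
  if (t - 4 * (a + b + c) * ⌊t / (4 * (a + b + c))⌋) ≤ 2 * (a + b + c) then
    psiHalf a b c (t - 4 * (a + b + c) * ⌊t / (4 * (a + b + c))⌋)
  else
    -psiHalf a b c (4 * (a + b + c) - (t - 4 * (a + b + c) * ⌊t / (4 * (a + b + c))⌋))

/-- `ψ_s(a,b,c)`: the `s`-th periodic antiderivative of `ψ_0(a,b,c)` with zero mean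
value over the period `[0, 4(a+b+c)]`. -/
def psi : ℕ → ℝ → ℝ → ℝ → ℝ → ℝ
  | 0 => psiZero
  | (s + 1) => fun a b c t =>
      (∫ x in (0:ℝ)..t, psi s a b c x) -
        (1 / (4 * (a + b + c))) *
          ∫ x in (0:ℝ)..(4 * (a + b + c)), ∫ u in (0:ℝ)..x, psi s a b c u

/-- The modulus of continuity `ω(D^k, X; δ) = sup {‖f⁽ᵏ⁾‖ : f ∈ X, ‖f‖ ≤ δ}` of the
differentiation operator `D^k` on a class `X`. -/
def omegaMod (k : ℕ) (X : Set (ℝ → ℝ)) (δ : ℝ) : ℝ :=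
  sSup {y : ℝ | ∃ f ∈ X, M 0 f ≤ δ ∧ M k f = y}

end

/-!
Put `P = β + b`. The function `ψ_0(β,b,0)` is odd about `0` and even about `P`. Up to a translation
by `P`, the zero-mean primitive of such a function `w` is `x ↦ ∫ t in 0..x, w (P - t)`, which has
the same symmetries and whose values on `[0, P]` depend only on those of `w` there. On `[0, P]` the
first iterate is `min x b`, so for `s < r - 1` the norm `M_s(ψ_r(β,b,0))` is the value at `P` of an
iterated integral of `min x b`, which is continuous and strictly increasing in `P` and grows at
least linearly.

The norms `M_{r-1}(f)` and `M_r(f)` are positive because a bounded function with a constant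
derivative of some order is constant.
-/

open Set Topology

section UniformNorm

variable {h : ℝ → ℝ} {D : ℝ}

lemma abs_le_unif (hD : ∀ t, |h t| ≤ D) (x : ℝ) : |h x| ≤ unif h :=
  le_ciSup (f := fun t => |h t|) ⟨D, forall_mem_range.2 hD⟩ x

lemma unif_pos (hD : ∀ t, |h t| ≤ D) {x : ℝ} (hx : h x ≠ 0) : 0 < unif h :=
  (abs_pos.2 hx).trans_le (abs_le_unif hD x)

lemma unif_eq_of_abs_le_of_abs_eq (hD : ∀ t, |h t| ≤ D) {x : ℝ} (hx : |h x| = D) :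
    unif h = D :=
  le_antisymm (ciSup_le hD) (hx ▸ abs_le_unif hD x)

lemma M_const_mul (k : ℕ) (c : ℝ) (f : ℝ → ℝ) : M k (fun t => c * f t) = |c| * M k f := by
  simp only [M, unif, iteratedDeriv_const_mul_field, abs_mul,
    Real.mul_iSup_of_nonneg (abs_nonneg c)]

end UniformNorm

section BoundedFunctions

variable {f : ℝ → ℝ} {C : ℝ}

/- The `n`-th difference with step `δ` is at most `2 ^ n * C`, and by the mean value theorem it is
`δ ^ n` times a value of the `n`-th derivative. -/
lemma exists_pow_mul_abs_iteratedDeriv_le {δ : ℝ} (hδ : 0 < δ) (n : ℕ) (hf : ContDiff ℝ n f)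
    (hC : ∀ t, |f t| ≤ C) (t : ℝ) :
    ∃ ξ ∈ Icc t (t + n * δ), δ ^ n * |iteratedDeriv n f ξ| ≤ 2 ^ n * C := by
  induction n generalizing f C with
  | zero => exact ⟨t, by simp, by simpa using hC t⟩
  | succ n ih =>
    have hfn : ContDiff ℝ n f := hf.of_le (by exact_mod_cast n.le_succ)
    have hshift : ContDiff ℝ n (fun x => f (x + δ)) := hfn.comp (by fun_prop)
    have hdiffC : ∀ x, |f (x + δ) - f x| ≤ 2 * C := fun x =>
      (abs_sub _ _).trans (by linarith [hC (x + δ), hC x])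
    obtain ⟨ξ, hξ, hξC⟩ := ih (hshift.sub hfn) hdiffC
    rw [iteratedDeriv_fun_sub hshift.contDiffAt hfn.contDiffAt, iteratedDeriv_comp_add_const] at hξC
    have hdiff : Differentiable ℝ (iteratedDeriv n f) :=
      hf.differentiable_iteratedDeriv n (by exact_mod_cast n.lt_succ_self)
    obtain ⟨η, hη, hslope⟩ := exists_deriv_eq_slope (iteratedDeriv n f)
      (show ξ < ξ + δ by linarith) hdiff.continuous.continuousOn hdiff.differentiableOn
    refine ⟨η, ⟨by linarith [hξ.1, hη.1], by push_cast; linarith [hξ.2, hη.2]⟩, ?_⟩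
    calc δ ^ (n + 1) * |iteratedDeriv (n + 1) f η|
        = δ ^ n * |iteratedDeriv n f (ξ + δ) - iteratedDeriv n f ξ| := by
          rw [iteratedDeriv_succ, hslope, add_sub_cancel_left, abs_div, abs_of_pos hδ]
          field_simp
          ring
      _ ≤ 2 ^ (n + 1) * C := by rwa [pow_succ, mul_assoc]

lemma exists_abs_iteratedDeriv_le_of_lipschitzWith {n : ℕ} (hf : ContDiff ℝ n f)
    (hC : ∀ t, |f t| ≤ C) {K : NNReal} (hK : LipschitzWith K (iteratedDeriv n f)) :
    ∃ D, ∀ t, |iteratedDeriv n f t| ≤ D := by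
  refine ⟨2 ^ n * C + K * n, fun t => ?_⟩
  obtain ⟨ξ, hξ, hξC⟩ := exists_pow_mul_abs_iteratedDeriv_le one_pos n hf hC t
  have htξ : |t - ξ| ≤ n := abs_le.2 ⟨by linarith [hξ.2], by linarith [hξ.1, hξ.2]⟩
  calc |iteratedDeriv n f t|
      ≤ |iteratedDeriv n f ξ| + |iteratedDeriv n f t - iteratedDeriv n f ξ| := by
        linarith [abs_sub_abs_le_abs_sub (iteratedDeriv n f t) (iteratedDeriv n f ξ)]
    _ ≤ 2 ^ n * C + K * |t - ξ| :=
        add_le_add (by simpa using hξC) (hK.dist_le_mul t ξ)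
    _ ≤ 2 ^ n * C + K * n := by gcongr

lemma eq_zero_of_iteratedDeriv_eq_const {n : ℕ} (hn : n ≠ 0) (hf : ContDiff ℝ n f)
    (hC : ∀ t, |f t| ≤ C) {c : ℝ} (hc : ∀ t, iteratedDeriv n f t = c) : c = 0 := by
  by_contra hc0
  have hbound : ∀ δ > 0, δ ^ n * |c| ≤ 2 ^ n * C := fun δ hδ => by
    obtain ⟨ξ, -, hξ⟩ := exists_pow_mul_abs_iteratedDeriv_le hδ n hf hC 0
    rwa [hc] at hξ
  have hlim : Tendsto (fun δ : ℝ => δ ^ n * |c|) atTop atTop :=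
    (tendsto_pow_atTop hn).atTop_mul_const (abs_pos.2 hc0)
  obtain ⟨δ, hδ, hlt⟩ := ((eventually_gt_atTop 0).and (hlim.eventually_gt_atTop _)).exists
  exact (hbound δ hδ).not_gt hlt

lemma eq_of_iteratedDeriv_eq_const {n : ℕ} (hf : ContDiff ℝ n f) (hC : ∀ t, |f t| ≤ C)
    {c : ℝ} (hc : ∀ t, iteratedDeriv n f t = c) (x y : ℝ) : f x = f y := by
  induction n generalizing c with
  | zero => simp only [iteratedDeriv_zero] at hc; rw [hc x, hc y]
  | succ n ih =>
    obtain rfl : c = 0 := eq_zero_of_iteratedDeriv_eq_const n.succ_ne_zero hf hC hc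
    have hdiff : Differentiable ℝ (iteratedDeriv n f) :=
      hf.differentiable_iteratedDeriv n (by exact_mod_cast n.lt_succ_self)
    rw [iteratedDeriv_succ] at hc
    exact ih (hf.of_le (by exact_mod_cast n.le_succ))
      fun t => is_const_of_deriv_eq_zero hdiff hc t 0

end BoundedFunctions

/- The hypothesis constrains `h` only where it is differentiable, since `deriv` is `0` elsewhere;
absolute continuity makes up for this. -/
lemma eq_of_lipschitzWith_of_deriv_eq_zero {h : ℝ → ℝ} {K : NNReal} (hK : LipschitzWith K h)
    (hderiv : ∀ t, deriv h t = 0) (x y : ℝ) : h x = h y := by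
  have hftc := (hK.lipschitzOnWith (s := uIcc y x)).absolutelyContinuousOnInterval
    |>.integral_deriv_eq_sub
  simp only [hderiv, intervalIntegral.integral_zero] at hftc
  linarith

namespace MemL

variable {r : ℕ} {f : ℝ → ℝ}

lemma pred (hf : MemL r f) : MemL (r - 1) f := by
  obtain ⟨hcont, ⟨C, hC⟩, hdiff, K, hK⟩ := hf
  refine ⟨hcont, ⟨C, hC⟩, hdiff.of_le (by exact_mod_cast Nat.sub_le _ _), ?_⟩
  obtain _ | _ | n := r
  · exact ⟨K, hK⟩
  · exact ⟨K, hK⟩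
  · obtain ⟨D, hD⟩ := exists_abs_iteratedDeriv_le_of_lipschitzWith hdiff hC hK
    refine ⟨D.toNNReal, lipschitzWith_of_nnnorm_deriv_le
      (hdiff.differentiable_iteratedDeriv n (by exact_mod_cast n.lt_succ_self)) fun t => ?_⟩
    rw [← iteratedDeriv_succ, ← norm_toNNReal]
    exact Real.toNNReal_mono (hD t)

lemma M_pos (hf : MemL r f) (hnc : ∃ x y : ℝ, f x ≠ f y) : 0 < M r f := by
  obtain ⟨-, ⟨C, hC⟩, hdiff, K, hK⟩ := hf
  obtain ⟨x, y, hxy⟩ := hnc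
  obtain _ | n := r
  · obtain ⟨z, hz⟩ : ∃ z, f z ≠ 0 := by
      by_contra! hzero
      exact hxy ((hzero x).trans (hzero y).symm)
    exact unif_pos (x := z) (by simpa using hC) (by simpa using hz)
  · have hle : ∀ t, |iteratedDeriv (n + 1) f t| ≤ K := fun t => by
      rw [iteratedDeriv_succ]
      exact norm_deriv_le_of_lipschitz hK
    obtain ⟨z, hz⟩ : ∃ z, iteratedDeriv (n + 1) f z ≠ 0 := by
      by_contra! hzero
      rw [iteratedDeriv_succ] at hzero
      exact hxy (eq_of_iteratedDeriv_eq_const hdiff hC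
        (fun t => eq_of_lipschitzWith_of_deriv_eq_zero hK hzero t 0) x y)
    exact unif_pos hle hz

end MemL

section QuarterWave

variable {P : ℝ} {w v : ℝ → ℝ}

/-- Quarter-wave symmetry with quarter period `P`: odd about `0` and even about `P`. All the
functions `ψ_s(a,b,c)` have it with `P = a + b + c`, up to a translation. -/
structure QuarterWave (P : ℝ) (w : ℝ → ℝ) : Prop where
  odd : w.Odd
  reflect : ∀ x, w (2 * P - x) = w x

/-- The primitive, vanishing at `0`, of `w` reflected on the quarter period `[0, P]`. Its values on
`[0, P]` depend only on those of `w` there, and on quarter waves it is the zero-mean primitive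
translated by `P`. -/
noncomputable def quarterPrimitive (P : ℝ) (w : ℝ → ℝ) (x : ℝ) : ℝ := ∫ t in (0 : ℝ)..x, w (P - t)

lemma intervalIntegrable_comp_sub_left (hint : ∀ x y, IntervalIntegrable w volume x y)
    (P x y : ℝ) : IntervalIntegrable (fun t => w (P - t)) volume x y := by
  simpa using (hint (P - x) (P - y)).comp_sub_left P

lemma integral_eq_zero_of_antiperiodic {T : ℝ} (hanti : w.Antiperiodic T)
    (hint : ∀ x y, IntervalIntegrable w volume x y) (x : ℝ) :
    ∫ t in x..(x + 2 * T), w t = 0 := by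
  have hsecond : ∫ t in (x + T)..(x + 2 * T), w t = -∫ t in x..(x + T), w t := by
    rw [show x + 2 * T = x + T + T by ring, ← intervalIntegral.integral_comp_add_right,
      ← intervalIntegral.integral_neg]
    simp only [hanti _]
  rw [← intervalIntegral.integral_add_adjacent_intervals (hint x (x + T)) (hint _ _), hsecond,
    add_neg_cancel]

lemma quarterPrimitive_zero : quarterPrimitive P w 0 = 0 := intervalIntegral.integral_same

lemma quarterPrimitive_self : quarterPrimitive P w P = ∫ t in (0 : ℝ)..P, w t := by
  simp [quarterPrimitive, intervalIntegral.integral_comp_sub_left (fun t => w t)]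

lemma continuous_quarterPrimitive (hint : ∀ x y, IntervalIntegrable w volume x y) :
    Continuous (quarterPrimitive P w) :=
  intervalIntegral.continuous_primitive (intervalIntegrable_comp_sub_left hint P) 0

lemma intervalIntegrable_iterate_quarterPrimitive
    (hint : ∀ x y, IntervalIntegrable w volume x y) (n : ℕ) (x y : ℝ) :
    IntervalIntegrable ((quarterPrimitive P)^[n] w) volume x y := by
  induction n generalizing x y with
  | zero => exact hint x y
  | succ n ih =>
    rw [Function.iterate_succ_apply']
    exact (continuous_quarterPrimitive ih).intervalIntegrable x y

lemma eqOn_quarterPrimitive (heq : EqOn w v (Icc 0 P)) :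
    EqOn (quarterPrimitive P w) (quarterPrimitive P v) (Icc 0 P) := fun x hx =>
  intervalIntegral.integral_congr_Ioo_of_le hx.1 fun t ht =>
    heq ⟨by linarith [ht.2, hx.2], by linarith [ht.1]⟩

lemma eqOn_iterate_quarterPrimitive (heq : EqOn w v (Icc 0 P)) (n : ℕ) :
    EqOn ((quarterPrimitive P)^[n] w) ((quarterPrimitive P)^[n] v) (Icc 0 P) := by
  induction n with
  | zero => exact heq
  | succ n ih =>
    simp only [Function.iterate_succ_apply']
    exact eqOn_quarterPrimitive ih

lemma monotoneOn_quarterPrimitive (hint : ∀ x y, IntervalIntegrable w volume x y)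
    (hnonneg : ∀ x ∈ Ioo 0 P, 0 ≤ w x) : MonotoneOn (quarterPrimitive P w) (Icc 0 P) := by
  intro x hx y hy hxy
  have hint' := intervalIntegrable_comp_sub_left hint P
  have hincrement : ∫ _t in x..y, (0 : ℝ) ≤ ∫ t in x..y, w (P - t) :=
    intervalIntegral.integral_mono_on_of_le_Ioo hxy (by simp) (hint' x y) fun t ht =>
      hnonneg _ ⟨by linarith [ht.2, hy.2], by linarith [ht.1, hx.1]⟩
  rw [intervalIntegral.integral_zero,
    ← intervalIntegral.integral_interval_sub_left (hint' 0 y) (hint' 0 x)] at hincrement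
  exact sub_nonneg.1 hincrement

lemma quarterPrimitive_nonneg (hint : ∀ x y, IntervalIntegrable w volume x y)
    (hnonneg : ∀ x ∈ Ioo 0 P, 0 ≤ w x) {x : ℝ} (hx : x ∈ Icc 0 P) :
    0 ≤ quarterPrimitive P w x := by
  rw [← quarterPrimitive_zero (P := P) (w := w)]
  exact monotoneOn_quarterPrimitive hint hnonneg ⟨le_rfl, hx.1.trans hx.2⟩ hx hx.1

lemma iterate_quarterPrimitive_nonneg (hint : ∀ x y, IntervalIntegrable w volume x y)
    (hnonneg : ∀ x ∈ Ioo 0 P, 0 ≤ w x) (n : ℕ) {x : ℝ} (hx : x ∈ Ioo 0 P) :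
    0 ≤ (quarterPrimitive P)^[n] w x := by
  induction n generalizing x with
  | zero => exact hnonneg x hx
  | succ n ih =>
    rw [Function.iterate_succ_apply']
    exact quarterPrimitive_nonneg (intervalIntegrable_iterate_quarterPrimitive hint n)
      (fun y hy => ih hy) (Ioo_subset_Icc_self hx)

namespace QuarterWave

lemma antiperiodic (hw : QuarterWave P w) : w.Antiperiodic (2 * P) := fun x => by
  rw [← hw.odd, ← hw.reflect (-x)]
  ring_nf

lemma apply_add_eq_apply_sub (hw : QuarterWave P w) (t : ℝ) : w (P + t) = w (P - t) := by
  rw [← hw.reflect (P - t)]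
  ring_nf

lemma abs_le_of_forall_mem_Icc (hw : QuarterWave P w) (hP : 0 < P) {D : ℝ}
    (hD : ∀ x ∈ Icc 0 P, |w x| ≤ D) (x : ℝ) : |w x| ≤ D := by
  have hper : Function.Periodic (fun x => |w x|) (2 * P) := fun x => by
    simp only [hw.antiperiodic x, abs_neg]
  obtain ⟨y, hy, hxy⟩ := hper.exists_mem_Ico (by positivity) x (-P)
  have habs : |w y| = |w (|y|)| := by
    rcases abs_choice y with hy' | hy' <;> simp [hy', hw.odd y]
  rw [hxy, habs]
  exact hD _ ⟨abs_nonneg y, abs_le.2 ⟨hy.1, by linarith [hy.2]⟩⟩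

lemma primitive (hw : QuarterWave P w) (hint : ∀ x y, IntervalIntegrable w volume x y) :
    QuarterWave P (quarterPrimitive P w) where
  odd x := by
    have heven : ∀ t, w (P - -t) = w (P - t) := fun t => by
      rw [sub_neg_eq_add, hw.apply_add_eq_apply_sub]
    calc ∫ t in (0 : ℝ)..-x, w (P - t) = -∫ t in (-x)..(-0), w (P - t) := by
          rw [neg_zero, intervalIntegral.integral_symm]
      _ = -∫ t in (0 : ℝ)..x, w (P - t) := by
          rw [← intervalIntegral.integral_comp_neg (fun t => w (P - t))]
          simp only [heven]
  reflect x := by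
    have hodd : ∀ t, w (P - (2 * P - t)) = -w (P - t) := fun t => by
      rw [← hw.odd]
      ring_nf
    have hint' := intervalIntegrable_comp_sub_left hint P
    have hmiddle : ∫ t in x..(2 * P - x), w (P - t) = 0 := by
      have hreflect := intervalIntegral.integral_comp_sub_left (a := x) (b := 2 * P - x)
        (fun t => w (P - t)) (2 * P)
      simp only [hodd, intervalIntegral.integral_neg, sub_sub_cancel] at hreflect
      linarith
    rw [← intervalIntegral.integral_interval_sub_left (hint' 0 _) (hint' 0 x)] at hmiddle
    exact sub_eq_zero.1 hmiddle

lemma iterate_primitive (hw : QuarterWave P w)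
    (hint : ∀ x y, IntervalIntegrable w volume x y) (n : ℕ) :
    QuarterWave P ((quarterPrimitive P)^[n] w) := by
  induction n with
  | zero => exact hw
  | succ n ih =>
    rw [Function.iterate_succ_apply']
    exact ih.primitive (intervalIntegrable_iterate_quarterPrimitive hint n)

lemma quarterPrimitive_sub_eq_integral (hw : QuarterWave P w) (x : ℝ) :
    quarterPrimitive P w (x - P) = ∫ t in P..x, w t := by
  simp only [quarterPrimitive, ← hw.apply_add_eq_apply_sub]
  simp [intervalIntegral.integral_comp_add_left (fun t => w t)]

lemma zeroMeanPrimitive_comp_sub_const (hw : QuarterWave P w)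
    (hint : ∀ x y, IntervalIntegrable w volume x y) (hP : P ≠ 0) (d t : ℝ) :
    (∫ x in (0 : ℝ)..t, w (x - d)) -
        (1 / (4 * P)) * ∫ x in (0 : ℝ)..(4 * P), ∫ u in (0 : ℝ)..x, w (u - d) =
      quarterPrimitive P w (t - d - P) := by
  have hprimitive : ∀ x, ∫ u in (0 : ℝ)..x, w (u - d) =
      quarterPrimitive P w (x - (d + P)) - quarterPrimitive P w (-d - P) := by
    intro x
    rw [← sub_sub, hw.quarterPrimitive_sub_eq_integral, hw.quarterPrimitive_sub_eq_integral,
      intervalIntegral.integral_interval_sub_left (hint _ _) (hint _ _),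
      intervalIntegral.integral_comp_sub_right, zero_sub]
  have hcont : Continuous fun x => quarterPrimitive P w (x - (d + P)) :=
    (continuous_quarterPrimitive hint).comp (by fun_prop)
  have hmean : ∫ x in (0 : ℝ)..(4 * P), quarterPrimitive P w (x - (d + P)) = 0 := by
    convert integral_eq_zero_of_antiperiodic
      ((hw.primitive hint).antiperiodic.sub_const (d + P))
      hcont.intervalIntegrable 0 using 2
    ring
  simp only [hprimitive]
  rw [intervalIntegral.integral_sub (hcont.intervalIntegrable _ _) (by simp), hmean,
    intervalIntegral.integral_const, sub_zero, smul_eq_mul, sub_sub t]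
  field_simp
  ring

lemma unif_quarterPrimitive_comp_sub_const (hw : QuarterWave P w)
    (hint : ∀ x y, IntervalIntegrable w volume x y) (hP : 0 < P)
    (hnonneg : ∀ x ∈ Ioo 0 P, 0 ≤ w x) (d : ℝ) :
    unif (fun t => quarterPrimitive P w (t - d)) = quarterPrimitive P w P := by
  have habs : ∀ x ∈ Icc 0 P, |quarterPrimitive P w x| = quarterPrimitive P w x :=
    fun x hx => abs_of_nonneg (quarterPrimitive_nonneg hint hnonneg hx)
  have hPmem : P ∈ Icc 0 P := ⟨hP.le, le_rfl⟩
  refine unif_eq_of_abs_le_of_abs_eq (x := P + d) (fun t => ?_) ?_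
  · refine (hw.primitive hint).abs_le_of_forall_mem_Icc hP (fun x hx => ?_) _
    rw [habs x hx]
    exact monotoneOn_quarterPrimitive hint hnonneg hx hPmem hx.2
  · rw [add_sub_cancel_right, habs P hPmem]

end QuarterWave

end QuarterWave

section QuarterPeak

variable {P Q : ℝ} {f : ℝ → ℝ}

/-- The value at the end `P` of the quarter period of the `n`-fold iterated `quarterPrimitive` of
`f`. For a quarter wave that is nonnegative on `[0, P]` and `n ≥ 1` it is the uniform norm of the
`n`-fold zero-mean primitive. -/
noncomputable def quarterPeak (f : ℝ → ℝ) (n : ℕ) (P : ℝ) : ℝ := (quarterPrimitive P)^[n] f P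

lemma quarterPeak_succ (f : ℝ → ℝ) (n : ℕ) (P : ℝ) :
    quarterPeak f (n + 1) P = ∫ t in (0 : ℝ)..P, (quarterPrimitive P)^[n] f t := by
  rw [quarterPeak, Function.iterate_succ_apply', quarterPrimitive_self]

lemma continuous_iterate_quarterPrimitive (hf : Continuous f) (n : ℕ) :
    Continuous fun p : ℝ × ℝ => (quarterPrimitive p.2)^[n] f p.1 := by
  induction n with
  | zero => exact hf.comp continuous_fst
  | succ n ih =>
    simp only [Function.iterate_succ_apply']
    exact intervalIntegral.continuous_parametric_intervalIntegral_of_continuous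
      (f := fun (p : ℝ × ℝ) t => (quarterPrimitive p.2)^[n] f (p.2 - t))
      (ih.comp (g := fun p : ℝ × ℝ => (quarterPrimitive p.2)^[n] f p.1)
        (f := fun q : (ℝ × ℝ) × ℝ => (q.1.2 - q.2, q.1.2)) (by fun_prop)) continuous_fst

lemma continuous_quarterPeak (hf : Continuous f) (n : ℕ) : Continuous (quarterPeak f n) :=
  (continuous_iterate_quarterPrimitive hf n).comp (f := fun P : ℝ => (P, P)) (by fun_prop)

lemma iterate_quarterPrimitive_pos (hint : ∀ x y, IntervalIntegrable f volume x y)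
    (hpos : ∀ x ∈ Ioc 0 P, 0 < f x) (n : ℕ) {x : ℝ} (hx : x ∈ Ioc 0 P) :
    0 < (quarterPrimitive P)^[n] f x := by
  induction n generalizing x with
  | zero => exact hpos x hx
  | succ n ih =>
    rw [Function.iterate_succ_apply']
    exact intervalIntegral.intervalIntegral_pos_of_pos_on
      (intervalIntegrable_comp_sub_left (intervalIntegrable_iterate_quarterPrimitive hint n) P 0 x)
      (fun t ht => ih ⟨by linarith [ht.2, hx.2], by linarith [ht.1]⟩) hx.1

lemma monotoneOn_iterate_quarterPrimitive (hint : ∀ x y, IntervalIntegrable f volume x y)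
    (hmono : MonotoneOn f (Icc 0 P)) (hnonneg : ∀ x ∈ Ioo 0 P, 0 ≤ f x) (n : ℕ) :
    MonotoneOn ((quarterPrimitive P)^[n] f) (Icc 0 P) := by
  cases n with
  | zero => exact hmono
  | succ n =>
    rw [Function.iterate_succ_apply']
    exact monotoneOn_quarterPrimitive (intervalIntegrable_iterate_quarterPrimitive hint n)
      fun x hx => iterate_quarterPrimitive_nonneg hint hnonneg n hx

lemma iterate_quarterPrimitive_le_of_le (hint : ∀ x y, IntervalIntegrable f volume x y)
    (hPQ : P ≤ Q) (hmono : MonotoneOn f (Icc 0 Q)) (hnonneg : ∀ x ∈ Ioo 0 Q, 0 ≤ f x) (n : ℕ)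
    {x : ℝ} (hx : x ∈ Icc 0 P) :
    (quarterPrimitive P)^[n] f x ≤ (quarterPrimitive Q)^[n] f x := by
  induction n generalizing x with
  | zero => exact le_rfl
  | succ n ih =>
    simp only [Function.iterate_succ_apply']
    have hint' (R : ℝ) := intervalIntegrable_comp_sub_left
      (intervalIntegrable_iterate_quarterPrimitive (P := R) hint n) R 0 x
    refine intervalIntegral.integral_mono_on hx.1 (hint' P) (hint' Q) fun t ht => ?_
    calc (quarterPrimitive P)^[n] f (P - t)
        ≤ (quarterPrimitive Q)^[n] f (P - t) := ih ⟨by linarith [ht.2, hx.2], by linarith [ht.1]⟩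
      _ ≤ (quarterPrimitive Q)^[n] f (Q - t) :=
        monotoneOn_iterate_quarterPrimitive hint hmono hnonneg n
          ⟨by linarith [ht.2, hx.2], by linarith [ht.1]⟩
          ⟨by linarith [ht.2, hx.2], by linarith [ht.1]⟩ (by linarith)

lemma strictMonoOn_quarterPeak_succ (hint : ∀ x y, IntervalIntegrable f volume x y)
    (hmono : MonotoneOn f (Ici 0)) (hpos : ∀ x, 0 < x → 0 < f x) (n : ℕ) :
    StrictMonoOn (quarterPeak f (n + 1)) (Ici 0) := by
  intro P hP Q _ hPQ
  have hint' (R : ℝ) := intervalIntegrable_iterate_quarterPrimitive (P := R) hint n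
  have hfirst : ∫ t in (0 : ℝ)..P, (quarterPrimitive P)^[n] f t ≤
      ∫ t in (0 : ℝ)..P, (quarterPrimitive Q)^[n] f t :=
    intervalIntegral.integral_mono_on hP (hint' P _ _) (hint' Q _ _) fun t ht =>
      iterate_quarterPrimitive_le_of_le hint hPQ.le (hmono.mono Icc_subset_Ici_self)
        (fun x hx => (hpos x hx.1).le) n ht
  have hsecond : 0 < ∫ t in P..Q, (quarterPrimitive Q)^[n] f t :=
    intervalIntegral.intervalIntegral_pos_of_pos_on (hint' Q _ _) (fun t ht =>
      iterate_quarterPrimitive_pos hint (fun x hx => hpos x hx.1) n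
        ⟨hP.trans_lt ht.1, ht.2.le⟩) hPQ
  rw [quarterPeak_succ, quarterPeak_succ,
    ← intervalIntegral.integral_add_adjacent_intervals (hint' Q 0 P) (hint' Q P Q)]
  linarith

lemma mul_quarterPeak_le_quarterPeak_succ (hint : ∀ x y, IntervalIntegrable f volume x y)
    (hmono : MonotoneOn f (Icc 0 Q)) (hnonneg : ∀ x ∈ Ioo 0 Q, 0 ≤ f x) (n : ℕ)
    (hP : 0 ≤ P) (hPQ : P ≤ Q) :
    (Q - P) * quarterPeak f n P ≤ quarterPeak f (n + 1) Q := by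
  have hint' := intervalIntegrable_iterate_quarterPrimitive (P := Q) hint n
  have hfirst : ∫ _t in (0 : ℝ)..P, (0 : ℝ) ≤ ∫ t in (0 : ℝ)..P, (quarterPrimitive Q)^[n] f t :=
    intervalIntegral.integral_mono_on_of_le_Ioo hP (by simp) (hint' _ _) fun t ht =>
      iterate_quarterPrimitive_nonneg hint hnonneg n ⟨ht.1, ht.2.trans_le hPQ⟩
  have hsecond : ∫ _t in P..Q, quarterPeak f n P ≤ ∫ t in P..Q, (quarterPrimitive Q)^[n] f t :=
    intervalIntegral.integral_mono_on hPQ (by simp) (hint' _ _) fun t ht =>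
      (iterate_quarterPrimitive_le_of_le hint hPQ hmono hnonneg n ⟨hP, le_rfl⟩).trans
        (monotoneOn_iterate_quarterPrimitive hint hmono hnonneg n ⟨hP, hPQ⟩
          ⟨hP.trans ht.1, ht.2⟩ ht.1)
  rw [intervalIntegral.integral_zero] at hfirst
  rw [intervalIntegral.integral_const, smul_eq_mul] at hsecond
  rw [quarterPeak_succ, ← intervalIntegral.integral_add_adjacent_intervals (hint' 0 P) (hint' P Q)]
  linarith

lemma tendsto_quarterPeak_succ_atTop (hint : ∀ x y, IntervalIntegrable f volume x y)
    (hmono : MonotoneOn f (Ici 0)) (hpos : ∀ x, 0 < x → 0 < f x) (n : ℕ) :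
    Tendsto (quarterPeak f (n + 1)) atTop atTop := by
  have hpeak : 0 < quarterPeak f n 1 :=
    iterate_quarterPrimitive_pos hint (fun x hx => hpos x hx.1) n ⟨one_pos, le_rfl⟩
  have hlinear : Tendsto (fun P : ℝ => (P - 1) * quarterPeak f n 1) atTop atTop :=
    (tendsto_atTop_add_const_right _ (-1) tendsto_id).atTop_mul_const hpeak
  refine tendsto_atTop_mono' _ ?_ hlinear
  filter_upwards [eventually_ge_atTop 1] with P hP
  exact mul_quarterPeak_le_quarterPeak_succ hint (hmono.mono Icc_subset_Ici_self)
    (fun x hx => (hpos x hx.1).le) n zero_le_one hP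

end QuarterPeak

section RodovSplines

variable {a b c t : ℝ}

lemma psiHalf_reflect (a b c t : ℝ) : psiHalf a b c (2 * (a + b + c) - t) = psiHalf a b c t := by
  unfold psiHalf
  rw [sub_sub_cancel]
  rcases lt_trichotomy t (a + b + c) with hlt | rfl | hgt
  · rw [if_neg (by linarith), if_pos hlt.le]
  · rw [if_pos (by linarith), if_pos le_rfl]
    ring_nf
  · rw [if_pos (by linarith), if_neg (by linarith)]

lemma psiHalf_zero (ha : 0 ≤ a) (hP : 0 ≤ a + b + c) : psiHalf a b c 0 = 0 := by
  simp [psiHalf, psiBase, ha, hP]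

lemma psiZero_periodic (hP : a + b + c ≠ 0) :
    Function.Periodic (psiZero a b c) (4 * (a + b + c)) := fun t => by
  have hfloor : ⌊(t + 4 * (a + b + c)) / (4 * (a + b + c))⌋ = ⌊t / (4 * (a + b + c))⌋ + 1 := by
    rw [← Int.floor_add_one]
    congr 1
    field_simp
  have hreduce : t + 4 * (a + b + c) - 4 * (a + b + c) * (⌊t / (4 * (a + b + c))⌋ + 1 : ℤ) =
      t - 4 * (a + b + c) * ⌊t / (4 * (a + b + c))⌋ := by
    push_cast
    ring
  simp only [psiZero, hfloor, hreduce]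

lemma psiZero_of_mem_Ico (ht : t ∈ Ico 0 (4 * (a + b + c))) :
    psiZero a b c t = if t ≤ 2 * (a + b + c) then psiHalf a b c t else
      -psiHalf a b c (4 * (a + b + c) - t) := by
  have hP : 0 < 4 * (a + b + c) := ht.1.trans_lt ht.2
  have hfloor : ⌊t / (4 * (a + b + c))⌋ = 0 :=
    Int.floor_eq_zero_iff.2 ⟨div_nonneg ht.1 hP.le, (div_lt_one hP).2 ht.2⟩
  simp only [psiZero, hfloor, Int.cast_zero, mul_zero, sub_zero]

lemma psiZero_of_nonneg (hP : 0 < a + b + c) (ht : t ∈ Icc 0 (2 * (a + b + c))) :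
    psiZero a b c t = psiHalf a b c t := by
  rw [psiZero_of_mem_Ico ⟨ht.1, by linarith [ht.2]⟩, if_pos ht.2]

lemma psiZero_of_nonpos (ha : 0 ≤ a) (hP : 0 < a + b + c) (ht : t ∈ Icc (-(2 * (a + b + c))) 0) :
    psiZero a b c t = -psiHalf a b c (-t) := by
  have hshift : psiZero a b c t = psiZero a b c (t + 4 * (a + b + c)) :=
    (psiZero_periodic hP.ne' t).symm
  rcases ht.1.eq_or_lt with rfl | hleft
  · have hend : psiHalf a b c (2 * (a + b + c)) = 0 := by
      rw [← psiHalf_reflect, sub_self, psiHalf_zero ha hP.le]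
    rw [hshift, show -(2 * (a + b + c)) + 4 * (a + b + c) = 2 * (a + b + c) by ring,
      psiZero_of_nonneg hP ⟨by positivity, le_rfl⟩, neg_neg, hend, neg_zero]
  rcases ht.2.eq_or_lt with rfl | hright
  · rw [psiZero_of_nonneg hP ⟨le_rfl, by positivity⟩, neg_zero, psiHalf_zero ha hP.le, neg_zero]
  · rw [hshift, psiZero_of_mem_Ico ⟨by linarith, by linarith⟩, if_neg (by linarith)]
    ring_nf

lemma quarterWave_psiZero (ha : 0 ≤ a) (hP : 0 < a + b + c) :
    QuarterWave (a + b + c) (psiZero a b c) where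
  odd t := by
    have hper : Function.Periodic (fun t => psiZero a b c (-t) + psiZero a b c t)
        (4 * (a + b + c)) := fun t => by
      beta_reduce
      rw [psiZero_periodic hP.ne', neg_add, ← sub_eq_add_neg, (psiZero_periodic hP.ne').sub_eq]
    obtain ⟨y, hy, hty⟩ := hper.exists_mem_Ico (by positivity) t (-(2 * (a + b + c)))
    suffices psiZero a b c (-y) + psiZero a b c y = 0 from
      eq_neg_of_add_eq_zero_left (hty.trans this)
    rcases le_total 0 y with hy0 | hy0
    · rw [psiZero_of_nonneg hP ⟨hy0, by linarith [hy.2]⟩,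
        psiZero_of_nonpos ha hP ⟨by linarith [hy.2], by linarith⟩, neg_neg, neg_add_cancel]
    · rw [psiZero_of_nonneg hP ⟨by linarith, by linarith [hy.1]⟩,
        psiZero_of_nonpos ha hP ⟨hy.1, hy0⟩, add_neg_cancel]
  reflect t := by
    have hper : Function.Periodic
        (fun t => psiZero a b c (2 * (a + b + c) - t) - psiZero a b c t)
        (4 * (a + b + c)) := fun t => by
      beta_reduce
      rw [psiZero_periodic hP.ne', ← sub_sub, (psiZero_periodic hP.ne').sub_eq]
    obtain ⟨y, hy, hty⟩ := hper.exists_mem_Ico (by positivity) t 0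
    suffices psiZero a b c (2 * (a + b + c) - y) - psiZero a b c y = 0 from
      sub_eq_zero.1 (hty.trans this)
    rcases le_total y (2 * (a + b + c)) with hy2 | hy2
    · rw [psiZero_of_nonneg hP ⟨hy.1, hy2⟩, psiZero_of_nonneg hP ⟨by linarith, by linarith [hy.1]⟩,
        psiHalf_reflect, sub_self]
    · rw [← (psiZero_periodic hP.ne').sub_eq y,
        psiZero_of_nonpos ha hP ⟨by linarith [hy.2], by linarith⟩,
        psiZero_of_nonpos ha hP ⟨by linarith, by linarith [hy.2]⟩, ← psiHalf_reflect]
      ring_nf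

lemma psiZero_eq_psiBase (ht : t ∈ Ioc 0 (a + b + c)) : psiZero a b c t = psiBase a b t := by
  rw [psiZero_of_nonneg (ht.1.trans_le ht.2) ⟨ht.1.le, by linarith [ht.1, ht.2]⟩, psiHalf,
    if_pos ht.2]

lemma measurable_psiZero (a b c : ℝ) : Measurable (psiZero a b c) := by
  have hbase : Measurable (psiBase a b) :=
    .ite measurableSet_Iic measurable_const
      (.ite measurableSet_Iic measurable_const measurable_const)
  have hhalf : Measurable (psiHalf a b c) :=
    .ite measurableSet_Iic hbase (hbase.comp (by fun_prop))
  have hreduce : Measurable fun t : ℝ => t - 4 * (a + b + c) * ⌊t / (4 * (a + b + c))⌋ := by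
    fun_prop
  exact .ite (measurableSet_le hreduce measurable_const) (hhalf.comp hreduce)
    (hhalf.comp (measurable_const.sub hreduce)).neg

lemma abs_psiZero_le_one (a b c t : ℝ) : |psiZero a b c t| ≤ 1 := by
  unfold psiZero psiHalf psiBase
  split_ifs <;> simp

lemma intervalIntegrable_psiZero (a b c x y : ℝ) :
    IntervalIntegrable (psiZero a b c) volume x y :=
  (intervalIntegrable_const (c := (1 : ℝ))).mono_fun
    (measurable_psiZero a b c).aestronglyMeasurable
    (.of_forall fun t => by simpa using abs_psiZero_le_one a b c t)

lemma intervalIntegrable_psi (n : ℕ) (a b c x y : ℝ) :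
    IntervalIntegrable (psi n a b c) volume x y := by
  induction n generalizing x y with
  | zero => exact intervalIntegrable_psiZero a b c x y
  | succ n ih =>
    exact ((intervalIntegral.continuous_primitive ih 0).sub continuous_const).intervalIntegrable x y

lemma continuous_psi_succ (n : ℕ) (a b c : ℝ) : Continuous (psi (n + 1) a b c) :=
  (intervalIntegral.continuous_primitive (intervalIntegrable_psi n a b c) 0).sub continuous_const

lemma hasDerivAt_psi_succ {n : ℕ} (hmeas : StronglyMeasurableAtFilter (psi n a b c) (𝓝 t))
    (hcont : ContinuousAt (psi n a b c) t) :
    HasDerivAt (psi (n + 1) a b c) (psi n a b c t) t :=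
  (intervalIntegral.integral_hasDerivAt_right (intervalIntegrable_psi n a b c 0 t) hmeas
    hcont).sub_const _

lemma iteratedDeriv_psi (s n : ℕ) (a b c : ℝ) :
    iteratedDeriv s (psi (s + (n + 1)) a b c) = psi (n + 1) a b c := by
  induction s generalizing n with
  | zero => rw [Nat.zero_add, iteratedDeriv_zero]
  | succ s ih =>
    rw [iteratedDeriv_succ, show s + 1 + (n + 1) = s + (n + 1 + 1) by ring, ih]
    funext t
    have hcont := continuous_psi_succ n a b c
    exact (hasDerivAt_psi_succ (hcont.stronglyMeasurableAtFilter _ _) hcont.continuousAt).deriv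

lemma psi_eq_iterate_quarterPrimitive (ha : 0 ≤ a) (hP : 0 < a + b + c) (n : ℕ) :
    psi n a b c =
      fun t => (quarterPrimitive (a + b + c))^[n] (psiZero a b c) (t - n * (a + b + c)) := by
  induction n with
  | zero => simp [psi]
  | succ n ih =>
    funext t
    have hint := intervalIntegrable_psiZero a b c
    have hprimitive := ((quarterWave_psiZero ha hP).iterate_primitive hint
      n).zeroMeanPrimitive_comp_sub_const (intervalIntegrable_iterate_quarterPrimitive hint n)
      hP.ne' (n * (a + b + c)) t
    simp only [psi]
    rw [ih, hprimitive, Function.iterate_succ_apply']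
    push_cast
    ring_nf

lemma psiZero_nonneg (ht : t ∈ Ioc 0 (a + b + c)) : 0 ≤ psiZero a b c t := by
  rw [psiZero_eq_psiBase ht]
  unfold psiBase
  split_ifs <;> simp

lemma M_psi (ha : 0 ≤ a) (hP : 0 < a + b + c) (s n : ℕ) :
    M s (psi (s + (n + 1)) a b c) = quarterPeak (psiZero a b c) (n + 1) (a + b + c) := by
  have hint := intervalIntegrable_psiZero a b c
  have hnonneg : ∀ x ∈ Ioo 0 (a + b + c), 0 ≤ psiZero a b c x := fun x hx =>
    psiZero_nonneg (Ioo_subset_Ioc_self hx)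
  rw [M, iteratedDeriv_psi, psi_eq_iterate_quarterPrimitive ha hP, quarterPeak]
  simp only [Function.iterate_succ_apply']
  exact ((quarterWave_psiZero ha hP).iterate_primitive hint n).unif_quarterPrimitive_comp_sub_const
    (intervalIntegrable_iterate_quarterPrimitive hint n) hP
    (fun x hx => iterate_quarterPrimitive_nonneg hint hnonneg n hx) _

lemma lipschitzWith_psi_one (a b c : ℝ) : LipschitzWith 1 (psi 1 a b c) := by
  refine LipschitzWith.of_dist_le_mul fun x y => ?_
  have hint := intervalIntegrable_psiZero a b c
  simp only [psi, Real.dist_eq, sub_sub_sub_cancel_right]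
  rw [intervalIntegral.integral_interval_sub_left (hint _ _) (hint _ _)]
  exact intervalIntegral.norm_integral_le_of_norm_le_const (f := psiZero a b c)
    fun t _ => abs_psiZero_le_one a b c t

lemma hasDerivAt_psi_one (ha : 0 ≤ a) (hc : 0 ≤ c) (ht : t ∈ Ioo a (a + b)) :
    HasDerivAt (psi 1 a b c) 1 t := by
  have hone : psi 0 a b c =ᶠ[𝓝 t] fun _ => (1 : ℝ) := by
    filter_upwards [isOpen_Ioo.mem_nhds ht] with x hx
    rw [psi, psiZero_eq_psiBase ⟨ha.trans_lt hx.1, by linarith [hx.2]⟩, psiBase,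
      if_neg hx.1.not_ge, if_pos hx.2.le]
  have hderiv := hasDerivAt_psi_succ (n := 0)
    (measurable_psiZero a b c).aestronglyMeasurable.stronglyMeasurableAtFilter
    (continuousAt_const.congr hone.symm)
  rwa [hone.eq_of_nhds] at hderiv

lemma M_psi_self (ha : 0 ≤ a) (hb : 0 < b) (hc : 0 ≤ c) (n : ℕ) :
    M (n + 1) (psi (n + 1) a b c) = 1 := by
  rw [M, iteratedDeriv_succ, iteratedDeriv_psi n 0]
  refine unif_eq_of_abs_le_of_abs_eq (x := a + b / 2)
    (fun t => norm_deriv_le_of_lipschitz (lipschitzWith_psi_one a b c)) ?_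
  rw [(hasDerivAt_psi_one ha hc ⟨by linarith, by linarith⟩).deriv, abs_one]

end RodovSplines

section OneParameterFamily

variable {β b : ℝ}

lemma quarterPrimitive_psiZero (hb : 0 ≤ b) :
    EqOn (quarterPrimitive (β + b) (psiZero β b 0)) (fun x => min x b) (Icc 0 (β + b)) := by
  intro x hx
  have hint := intervalIntegrable_comp_sub_left (intervalIntegrable_psiZero β b 0) (β + b)
  have hbase : ∀ t ∈ Ioo 0 x, psiZero β b 0 (β + b - t) = psiBase β b (β + b - t) := fun t ht =>
    psiZero_eq_psiBase ⟨by linarith [ht.2, hx.2], by linarith [ht.1]⟩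
  have hone : ∫ t in (0 : ℝ)..min x b, psiZero β b 0 (β + b - t) = ∫ _t in (0 : ℝ)..min x b, 1 :=
    intervalIntegral.integral_congr_Ioo_of_le (le_min hx.1 hb) fun t ht => by
      obtain ⟨htx, htb⟩ := lt_min_iff.1 ht.2
      rw [hbase t ⟨ht.1, htx⟩, psiBase, if_neg (by linarith), if_pos (by linarith [ht.1])]
  have hzero : ∫ t in (min x b)..x, psiZero β b 0 (β + b - t) = ∫ _t in (min x b)..x, 0 :=
    intervalIntegral.integral_congr_Ioo_of_le (min_le_left x b) fun t ht => by
      have hbt : b < t := (min_lt_iff.1 ht.1).resolve_left ht.2.not_gt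
      rw [hbase t ⟨hb.trans_lt hbt, ht.2⟩, psiBase, if_pos (by linarith)]
  rw [quarterPrimitive, ← intervalIntegral.integral_add_adjacent_intervals (hint 0 (min x b))
    (hint _ x), hone, hzero]
  simp

lemma M_psi_eq_quarterPeak_min (hβ : 0 ≤ β) (hb : 0 < b) (s n : ℕ) :
    M s (psi (s + (n + 1)) β b 0) = quarterPeak (fun x => min x b) n (β + b) := by
  have hP : 0 < β + b := by positivity
  rw [M_psi hβ (by simpa using hP), add_zero, quarterPeak, Function.iterate_succ_apply]
  exact eqOn_iterate_quarterPrimitive (quarterPrimitive_psiZero hb.le) n ⟨hP.le, le_rfl⟩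

lemma M_psi_pred (hβ : 0 ≤ β) (hb : 0 < b) (n : ℕ) : M n (psi (n + 1) β b 0) = b :=
  (M_psi_eq_quarterPeak_min hβ hb n 0).trans (min_eq_right (by linarith))

lemma continuousOn_M_psi (hb : 0 < b) (s n : ℕ) :
    ContinuousOn (fun β => M s (psi (s + (n + 1)) β b 0)) (Ici 0) := by
  have hcont : Continuous fun β => quarterPeak (fun x => min x b) n (β + b) :=
    (continuous_quarterPeak (by fun_prop) n).comp (by fun_prop)
  exact hcont.continuousOn.congr fun β hβ => M_psi_eq_quarterPeak_min hβ hb s n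

lemma strictMonoOn_M_psi (hb : 0 < b) (s n : ℕ) :
    StrictMonoOn (fun β => M s (psi (s + (n + 2)) β b 0)) (Ici 0) := by
  intro x (hx : 0 ≤ x) y (hy : 0 ≤ y) hxy
  beta_reduce
  rw [M_psi_eq_quarterPeak_min hx hb s (n + 1), M_psi_eq_quarterPeak_min hy hb s (n + 1)]
  have hcont : Continuous fun x => min x b := by fun_prop
  exact strictMonoOn_quarterPeak_succ hcont.intervalIntegrable
    (fun x _ y _ hxy => min_le_min_right b hxy) (fun x hx => lt_min hx hb) n
    (mem_Ici.2 (by positivity)) (mem_Ici.2 (by positivity)) (by gcongr)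

lemma tendsto_M_psi_atTop (hb : 0 < b) (s n : ℕ) :
    Tendsto (fun β => M s (psi (s + (n + 2)) β b 0)) atTop atTop := by
  have hcont : Continuous fun x => min x b := by fun_prop
  have hpeak := tendsto_quarterPeak_succ_atTop hcont.intervalIntegrable
    (fun x _ y _ hxy => min_le_min_right b hxy) (fun x hx => lt_min hx hb) n
  refine (hpeak.comp (tendsto_atTop_add_const_right _ b tendsto_id)).congr' ?_
  filter_upwards [eventually_ge_atTop 0] with β hβ
  exact (M_psi_eq_quarterPeak_min hβ hb s (n + 1)).symm

end OneParameterFamily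

theorem stmt13_general (r : ℕ) (hr : 1 ≤ r) (f : ℝ → ℝ) (hf : MemL r f)
    (hnc : ∃ x y : ℝ, f x ≠ f y)
    (α b : ℝ) (hα : α = M r f) (hb : b = M (r - 1) f / M r f)
    (g : ℝ → ℝ → ℝ) (hg : g = fun β t => α * psi r β b 0 t) :
    0 < α ∧ 0 < b ∧
    (∀ β : ℝ, 0 ≤ β → M (r - 1) (g β) = M (r - 1) f ∧ M r (g β) = M r f) ∧
    (∀ s : ℕ, s < r - 1 →
      ContinuousOn (fun β => M s (g β)) (Ici 0) ∧
      StrictMonoOn (fun β => M s (g β)) (Ici 0) ∧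
      Tendsto (fun β => M s (g β)) atTop atTop) := by
  have hα_pos : 0 < α := hα ▸ hf.M_pos hnc
  have hb_pos : 0 < b := hb ▸ div_pos (hf.pred.M_pos hnc) (hf.M_pos hnc)
  have hαb : α * b = M (r - 1) f := by rw [hb, ← hα, mul_div_cancel₀ _ hα_pos.ne']
  have hMg : ∀ k β, M k (g β) = α * M k (psi r β b 0) := fun k β => by
    rw [hg, M_const_mul, abs_of_pos hα_pos]
  simp only [hMg]
  refine ⟨hα_pos, hb_pos, fun β hβ => ?_, fun s hs => ?_⟩
  · obtain ⟨n, rfl⟩ := Nat.exists_eq_add_of_le' hr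
    rw [← hαb, ← hα, M_psi_self hβ hb_pos le_rfl, mul_one, Nat.add_sub_cancel,
      M_psi_pred hβ hb_pos]
    exact ⟨rfl, rfl⟩
  · obtain ⟨n, rfl⟩ : ∃ n, r = s + (n + 2) := ⟨r - s - 2, by omega⟩
    exact ⟨(continuousOn_M_psi hb_pos s (n + 1)).const_smul α,
      fun x hx y hy hxy => mul_lt_mul_of_pos_left (strictMonoOn_M_psi hb_pos s n hx hy hxy) hα_pos,
      (tendsto_M_psi_atTop hb_pos s n).const_mul_atTop hα_pos⟩

/-- The one-parameter spline family for `𝐤 = (0,k,r-1,r)`: for non-constant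
`f ∈ L^r_{∞,∞}`, the splines `g_β = α ψ_r(β,b,0)` with `α = M_r(f)` and
`b = M_{r-1}(f)/M_r(f)` match `M_{r-1}` and `M_r` of `f`, while for each
`s < r-1` the map `β ↦ M_s(g_β)` continuously increases to `∞`. -/
theorem stmt13 (r : ℕ) (hr : 3 ≤ r) (f : ℝ → ℝ) (hf : MemL r f)
    (hnc : ∃ x y : ℝ, f x ≠ f y)
    (α b : ℝ) (hα : α = M r f) (hb : b = M (r - 1) f / M r f)
    (g : ℝ → ℝ → ℝ) (hg : g = fun β t => α * psi r β b 0 t) :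
    0 < α ∧ 0 < b ∧
    (∀ β : ℝ, 0 ≤ β → M (r - 1) (g β) = M (r - 1) f ∧ M r (g β) = M r f) ∧
    (∀ s : ℕ, s < r - 1 →
      ContinuousOn (fun β => M s (g β)) (Set.Ici 0) ∧
      StrictMonoOn (fun β => M s (g β)) (Set.Ici 0) ∧
      Filter.Tendsto (fun β => M s (g β)) Filter.atTop Filter.atTop) :=
  stmt13_general r (by omega) f hf hnc α b hα hb g hg
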